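/- Let M ⊆ ℝⁿ be closed, B : ℝⁿ → ℝᵐ continuous with components B₁,…,B_m, and K := {x ∈ M : B_i(x) ≤ 0 for all i}. Let x ∈ ∂K ∩ int(M), set I_x := {i : B_i(x) = 0}, and assume each B_i with i ∈ I_x is continuously differentiable on a neighborhood of x and there exists v ∈ ℝⁿ with ⟨∇B_i(x), v⟩ < 0 for all i ∈ I_x. Then T_K(x) = {w ∈ ℝⁿ : ⟨∇B_i(x), w⟩ ≤ 0 for all i ∈ I_x}. -/

import Mathlib

open Filter Set
open scoped RealInnerProductSpace

/-- The contingent cone of `K` at `x` (sequence characterization). -/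
def contingentCone {n : ℕ} (K : Set (EuclideanSpace ℝ (Fin n)))
    (x : EuclideanSpace ℝ (Fin n)) : Set (EuclideanSpace ℝ (Fin n)) :=
  {v | ∃ (h : ℕ → ℝ) (w : ℕ → EuclideanSpace ℝ (Fin n)),
      (∀ i, 0 < h i) ∧ Filter.Tendsto h Filter.atTop (nhds 0) ∧
        Filter.Tendsto w Filter.atTop (nhds v) ∧ ∀ i, x + h i • w i ∈ K}

theorem stmt_6 {n m : ℕ} (M : Set (EuclideanSpace ℝ (Fin n))) (hM : IsClosed M)
    (B : Fin m → EuclideanSpace ℝ (Fin n) → ℝ) (hBcont : ∀ i, Continuous (B i))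
    (K : Set (EuclideanSpace ℝ (Fin n))) (hK : K = {y ∈ M | ∀ i, B i y ≤ 0})
    (x : EuclideanSpace ℝ (Fin n)) (hx : x ∈ frontier K ∩ interior M)
    (I : Set (Fin m)) (hI : I = {i | B i x = 0})
    (U : Set (EuclideanSpace ℝ (Fin n))) (hU : IsOpen U) (hxU : x ∈ U)
    (hB : ∀ i ∈ I, ContDiffOn ℝ 1 (B i) U)
    (htrans : ∃ v, ∀ i ∈ I, ⟪gradient (B i) x, v⟫ < 0) :
    contingentCone K x = {w | ∀ i ∈ I, ⟪gradient (B i) x, w⟫ ≤ 0} := by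
  have hKc : IsClosed K := by
    have : K = M ∩ ⋂ i, {y | B i y ≤ 0} := by
      rw [hK]; ext y; simp
    rw [this]
    exact hM.inter (isClosed_iInter fun i => isClosed_le (hBcont i) continuous_const)
  have hxK : x ∈ K := hKc.frontier_subset hx.1
  have hxB : ∀ i, B i x ≤ 0 := by
    rw [hK] at hxK; exact hxK.2
  have hd : ∀ i ∈ I, HasFDerivAt (B i) (fderiv ℝ (B i) x) x := fun i hi =>
    (((hB i hi).contDiffAt (hU.mem_nhds hxU)).differentiableAt one_ne_zero).hasFDerivAt
  have hg : ∀ i w, ⟪gradient (B i) x, w⟫ = fderiv ℝ (B i) x w := by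
    intro i w
    simp [gradient]
  have hI0 : ∀ i, i ∈ I ↔ B i x = 0 := by intro i; rw [hI]; rfl
  simp only [hg] at htrans ⊢
  obtain ⟨v, hv⟩ := htrans
  have key : ∀ w, (∀ i ∈ I, fderiv ℝ (B i) x w < 0) →
      ∀ᶠ t in nhdsWithin (0 : ℝ) (Ioi 0), x + t • w ∈ K := by
    intro w hw
    have hc : Continuous fun t : ℝ => x + t • w := by fun_prop
    have ht : Tendsto (fun t : ℝ => x + t • w) (nhdsWithin (0 : ℝ) (Ioi 0)) (nhds x) := by
      have := (hc.tendsto 0).mono_left (nhdsWithin_le_nhds (s := Ioi 0))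
      simpa using this
    have h1 : ∀ᶠ t in nhdsWithin (0 : ℝ) (Ioi 0), x + t • w ∈ M :=
      ht.eventually (mem_interior_iff_mem_nhds.1 hx.2)
    have h2 : ∀ᶠ t in nhdsWithin (0 : ℝ) (Ioi 0), ∀ i, B i (x + t • w) ≤ 0 := by
      rw [eventually_all]
      intro i
      by_cases hi : i ∈ I
      · have hl := ((hd i hi).hasLineDerivAt w).tendsto_slope_zero_right
        filter_upwards [hl.eventually (gt_mem_nhds (hw i hi)), self_mem_nhdsWithin] with t h3 h4
        have h4 : 0 < t := h4
        simp only [(hI0 i).1 hi, sub_zero, smul_eq_mul] at h3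
        by_contra hcon
        push Not at hcon
        have := mul_pos (inv_pos.2 h4) hcon
        linarith
      · have hlt : B i x < 0 := lt_of_le_of_ne (hxB i) fun h => hi ((hI0 i).2 h)
        have := (((hBcont i).tendsto x).comp ht).eventually (gt_mem_nhds hlt)
        exact this.mono fun t h => le_of_lt h
    filter_upwards [h1, h2] with t h3 h4
    rw [hK]; exact ⟨h3, h4⟩
  ext w
  constructor
  · rintro ⟨h, u, hpos, hh, hu, hmem⟩ i hi
    have hlim : Tendsto (fun k => (h k)⁻¹ • (B i (x + h k • u k) - B i x)) atTop
        (nhds (fderiv ℝ (B i) x w)) := by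
      refine (hasFDerivWithinAt_univ.2 (hd i hi)).lim ?_ (.of_forall fun _ => mem_univ _) ?_
      · simpa using hh.smul hu
      · refine hu.congr fun k => ?_
        rw [smul_smul, inv_mul_cancel₀ (hpos k).ne', one_smul]
    refine le_of_tendsto hlim (.of_forall fun k => ?_)
    have hk := hmem k
    rw [hK] at hk
    rw [(hI0 i).1 hi, sub_zero, smul_eq_mul]
    exact mul_nonpos_of_nonneg_of_nonpos (inv_pos.2 (hpos k)).le (hk.2 i)
  · intro hw
    have hch : ∀ k : ℕ, ∃ t : ℝ, 0 < t ∧ t < 1 / ((k : ℝ) + 1) ∧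
        x + t • (w + (1 / ((k : ℝ) + 1)) • v) ∈ K := by
      intro k
      have hk : 0 < 1 / ((k : ℝ) + 1) := Nat.one_div_pos_of_nat
      have h1 := key (w + (1 / ((k : ℝ) + 1)) • v) (by
        intro i hi
        rw [map_add, map_smul, smul_eq_mul]
        have := mul_neg_of_pos_of_neg hk (hv i hi)
        have := hw i hi
        linarith)
      have h2 : ∀ᶠ t in nhdsWithin (0 : ℝ) (Ioi 0), t ∈ Ioo 0 (1 / ((k : ℝ) + 1)) :=
        Ioo_mem_nhdsGT hk
      obtain ⟨t, h3, h4⟩ := (h1.and h2).exists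
      exact ⟨t, h4.1, h4.2, h3⟩
    choose t ht0 ht1 htK using hch
    refine ⟨t, fun k : ℕ => w + (1 / ((k : ℝ) + 1)) • v, ht0, ?_, ?_, htK⟩
    · exact squeeze_zero (fun k => (ht0 k).le) (fun k => (ht1 k).le)
        tendsto_one_div_add_atTop_nhds_zero_nat
    · have := (tendsto_one_div_add_atTop_nhds_zero_nat (𝕜 := ℝ)).smul_const v
      simpa using this.const_add w
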